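/- arXiv:2003.04425 — 2 statements merged into one kernel-verified Lean document; each statement's English description precedes it below -/
import Mathlib

section
/- Assume in addition that h is not constant and N ≥ 2. Then F is strictly increasing; moreover g(x) − F(x) = N(N−1)·∫₀¹ (F(x) − F(x·y))·y^{N−1} dy, which is strictly positive for every x > 0 and strictly negative for every x < 0. In particular, if v = F(x*) is the private signal and x* > 0 the aggregate informed demand, then the expected price of the last traded slice, g(x*), strictly exceeds v. -/
open MeasureTheory Filter Set

/-- Centered Gaussian density with variance `σ²`. -/
noncomputable def gq (σ z : ℝ) : ℝ :=
  Real.exp (-(z ^ 2) / (2 * σ ^ 2)) / (σ * Real.sqrt (2 * Real.pi))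

/-- The averaged kernel `q̄(σ,x,z)`. -/
noncomputable def gqbar (σ x z : ℝ) : ℝ :=
  if x = 0 then gq σ z else (1 / x) * ∫ y in (0:ℝ)..x, gq σ (y - z)

/-- `Φ⁺(y) = E[V·1_{V>y}]`. -/
noncomputable def Phip {Ω : Type*} [MeasurableSpace Ω] (P : Measure Ω) (V : Ω → ℝ) (y : ℝ) : ℝ :=
  ∫ ω in {ω | V ω > y}, V ω ∂P

/-- `Π⁺(y) = P(V > y)`. -/
noncomputable def Pip {Ω : Type*} [MeasurableSpace Ω] (P : Measure Ω) (V : Ω → ℝ) (y : ℝ) : ℝ :=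
  (P {ω | V ω > y}).toReal

/-- `Φ⁻(y) = E[V·1_{V≤y}]`. -/
noncomputable def Phim {Ω : Type*} [MeasurableSpace Ω] (P : Measure Ω) (V : Ω → ℝ) (y : ℝ) : ℝ :=
  ∫ ω in {ω | V ω ≤ y}, V ω ∂P

/-- `Π⁻(y) = P(V ≤ y)`. -/
noncomputable def Pim {Ω : Type*} [MeasurableSpace Ω] (P : Measure Ω) (V : Ω → ℝ) (y : ℝ) : ℝ :=
  (P {ω | V ω ≤ y}).toReal

/-- `Ψ⁺ = Φ⁺/Π⁺`. -/
noncomputable def Psip {Ω : Type*} [MeasurableSpace Ω] (P : Measure Ω) (V : Ω → ℝ) (y : ℝ) : ℝ :=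
  Phip P V y / Pip P V y

/-- `Ψ⁻ = Φ⁻/Π⁻`. -/
noncomputable def Psim {Ω : Type*} [MeasurableSpace Ω] (P : Measure Ω) (V : Ω → ℝ) (y : ℝ) : ℝ :=
  Phim P V y / Pim P V y

/-- `φ⁺_g`. -/
noncomputable def phip {Ω : Type*} [MeasurableSpace Ω] (P : Measure Ω) (V : Ω → ℝ)
    (σ : ℝ) (g : ℝ → ℝ) (x : ℝ) : ℝ :=
  (∫ z, Phip P V (g z) * gq σ (x - z)) / (∫ z, Pip P V (g z) * gq σ (x - z))

/-- `φ⁻_g`. -/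
noncomputable def phim {Ω : Type*} [MeasurableSpace Ω] (P : Measure Ω) (V : Ω → ℝ)
    (σ : ℝ) (g : ℝ → ℝ) (x : ℝ) : ℝ :=
  (∫ z, Phim P V (g z) * gq σ (x - z)) / (∫ z, Pim P V (g z) * gq σ (x - z))

/-- `φ_g`, equal to `φ⁺_g` on `[0,∞)` and `φ⁻_g` on `(−∞,0)`. -/
noncomputable def phig {Ω : Type*} [MeasurableSpace Ω] (P : Measure Ω) (V : Ω → ℝ)
    (σ : ℝ) (g : ℝ → ℝ) (x : ℝ) : ℝ :=
  if 0 ≤ x then phip P V σ g x else phim P V σ g x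

/-- The interior of the support of the law of `V` is `(m, M)` (with `V` bounded). -/
def SuppIoo {Ω : Type*} [MeasurableSpace Ω] (P : Measure Ω) (V : Ω → ℝ) (m M : ℝ) : Prop :=
  m < M ∧ (∀ᵐ ω ∂P, V ω ∈ Set.Icc m M) ∧
    (∀ y < M, 0 < P {ω | V ω > y}) ∧ (∀ y, m < y → 0 < P {ω | V ω ≤ y})

/-- Equation (E). -/
def SolvesE {Ω : Type*} [MeasurableSpace Ω] (P : Measure Ω) (V : Ω → ℝ)
    (σ : ℝ) (N : ℕ) (F : ℝ → ℝ) : Prop :=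
  ∀ x : ℝ, F x =
    ∫ z, ((1 / (N:ℝ)) * gq σ (x - z) + (((N:ℝ) - 1) / (N:ℝ)) * gqbar σ x z) * phig P V σ F z

lemma aux_gq_pos (σ : ℝ) (hσ : 0 < σ) (z : ℝ) : 0 < gq σ z := by
  unfold gq
  have := Real.pi_pos
  positivity

lemma aux_gq_int (σ : ℝ) (hσ : 0 < σ) : Integrable (gq σ) := by
  have h1 : Integrable (fun z : ℝ => Real.exp (-(1 / (2 * σ ^ 2)) * z ^ 2)) :=
    integrable_exp_neg_mul_sq (by positivity)
  have h2 := h1.div_const (σ * Real.sqrt (2 * Real.pi))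
  refine h2.congr (Eventually.of_forall fun z => ?_)
  simp only [gq]
  congr 2
  field_simp

lemma aux_int (σ : ℝ) (hσ : 0 < σ) (h : ℝ → ℝ) (hmeas : Measurable h)
    (hbdd : ∃ C, ∀ x, |h x| ≤ C) (x : ℝ) : Integrable (fun z => h (x + z) * gq σ z) := by
  obtain ⟨C, hC⟩ := hbdd
  refine (aux_gq_int σ hσ).bdd_mul (c := C) ?_ ?_
  · exact (hmeas.comp (measurable_const_add x)).aestronglyMeasurable
  · exact Eventually.of_forall fun z => hC _

lemma aux_cont (σ : ℝ) (hσ : 0 < σ) (h : ℝ → ℝ) (hmeas : Measurable h) (hmono : Monotone h)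
    (hbdd : ∃ C, ∀ x, |h x| ≤ C) : Continuous (fun x => ∫ z, h (x + z) * gq σ z) := by
  have hi := aux_int σ hσ h hmeas hbdd
  obtain ⟨C, hC⟩ := hbdd
  rw [continuous_iff_continuousAt]
  intro x
  refine continuousAt_of_dominated (bound := fun z => C * gq σ z) ?_ ?_ ?_ ?_
  · exact Eventually.of_forall fun y => (hi y).aestronglyMeasurable
  · refine Eventually.of_forall fun y => Eventually.of_forall fun z => ?_
    rw [norm_mul, Real.norm_eq_abs, Real.norm_eq_abs, abs_of_pos (aux_gq_pos σ hσ z)]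
    exact mul_le_mul_of_nonneg_right (hC _) (aux_gq_pos σ hσ z).le
  · exact (aux_gq_int σ hσ).const_mul C
  · have hc : {y | ¬ ContinuousAt h y}.Countable := hmono.countable_not_continuousAt
    have h0 : ∀ᵐ y : ℝ, ContinuousAt h y := by
      rw [ae_iff]; exact hc.measure_zero _
    have h1 : ∀ᵐ z : ℝ, ContinuousAt h (x + z) :=
      (measurePreserving_add_left volume x).quasiMeasurePreserving.ae h0
    filter_upwards [h1] with z hz
    refine ContinuousAt.mul ?_ continuousAt_const
    exact ContinuousAt.comp (g := h) (f := fun y => y + z) hz (by fun_prop)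

lemma aux_const (h : ℝ → ℝ) (hmono : Monotone h) (x d : ℝ) (hd : 0 < d)
    (hae : ∀ᵐ z : ℝ, h (x + d + z) = h (x + z)) : ∃ c, ∀ y, h y = c := by
  have h1 : ∀ n : ℤ, ∀ᵐ z : ℝ, h (x + d + (n * d + z)) = h (x + (n * d + z)) := fun n =>
    (measurePreserving_add_left volume ((n : ℝ) * d)).quasiMeasurePreserving.ae hae
  obtain ⟨z, hz⟩ := (ae_all_iff.2 h1).exists
  have h2 : ∀ n : ℤ, h (x + (n * d + z)) = h (x + z) := by
    intro n
    induction n using Int.induction_on with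
    | zero => simp
    | succ i ih =>
      have := hz i
      rw [ih] at this
      rw [← this]; congr 1; push_cast; ring
    | pred i ih =>
      have := hz (-(i : ℤ) - 1)
      rw [← this, ← ih]; congr 1; push_cast; ring
  refine ⟨h (x + z), fun y => le_antisymm ?_ ?_⟩
  · obtain ⟨n, hn⟩ := exists_int_gt ((y - x - z) / d)
    rw [div_lt_iff₀ hd] at hn
    rw [← h2 n]; exact hmono (by linarith)
  · obtain ⟨n, hn⟩ := exists_int_lt ((y - x - z) / d)
    rw [lt_div_iff₀ hd] at hn
    rw [← h2 n]; exact hmono (by linarith)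

lemma aux_strict (σ : ℝ) (hσ : 0 < σ) (h : ℝ → ℝ) (hmeas : Measurable h) (hmono : Monotone h)
    (hbdd : ∃ C, ∀ x, |h x| ≤ C) (hnc : ¬ ∃ c : ℝ, ∀ x, h x = c) :
    StrictMono (fun x => ∫ z, h (x + z) * gq σ z) := by
  have hi := aux_int σ hσ h hmeas hbdd
  intro x y hxy
  have hle : ∀ z, h (x + z) * gq σ z ≤ h (y + z) * gq σ z := fun z =>
    mul_le_mul_of_nonneg_right (hmono (by linarith)) (aux_gq_pos σ hσ z).le
  refine lt_of_le_of_ne (integral_mono (hi x) (hi y) hle) fun heq => hnc ?_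
  have h0 : ∫ z, (h (y + z) * gq σ z - h (x + z) * gq σ z) = 0 := by
    rw [integral_sub (hi y) (hi x)]; exact sub_eq_zero.2 heq.symm
  rw [integral_eq_zero_iff_of_nonneg (fun z => sub_nonneg.2 (hle z)) ((hi y).sub (hi x))] at h0
  refine aux_const h hmono x (y - x) (by linarith) ?_
  filter_upwards [h0] with z hz
  have hz' : h (y + z) * gq σ z - h (x + z) * gq σ z = 0 := hz
  rw [← sub_mul] at hz'
  have := (mul_eq_zero.1 hz').resolve_right (aux_gq_pos σ hσ z).ne'
  rw [show x + (y - x) + z = y + z by ring]; linarith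

lemma aux_ident (n : ℕ) (g A F : ℝ → ℝ) (hgc : Continuous g) (hFc : Continuous F)
    (hA : ∀ x, ∫ u in (0:ℝ)..x, g u = x * A x)
    (hF : ∀ x, ((n:ℝ) + 2) * F x = g x + ((n:ℝ) + 1) * A x) (x : ℝ) (hx : x ≠ 0) :
    ((n:ℝ) + 2) * ∫ y in (0:ℝ)..1, (F x - F (x * y)) * y ^ (n + 1) = F x - A x := by
  have hG : ∀ t, HasDerivAt (fun t => ∫ u in (0:ℝ)..t, g u) (g t) t := fun t =>
    intervalIntegral.integral_hasDerivAt_right (hgc.intervalIntegrable _ _)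
      (hgc.stronglyMeasurableAtFilter _ _) hgc.continuousAt
  have hd : ∀ y ∈ uIcc (0:ℝ) 1, HasDerivAt
      (fun y : ℝ => F x * y ^ (n + 2) - y ^ (n + 1) * (∫ u in (0:ℝ)..(x * y), g u) / x)
      (((n:ℝ) + 2) * ((F x - F (x * y)) * y ^ (n + 1))) y := by
    intro y _
    have h1 : HasDerivAt (fun y : ℝ => ∫ u in (0:ℝ)..(x * y), g u) (g (x * y) * x) y := by
      have := (hG (x * y)).comp y ((hasDerivAt_id y).const_mul x)
      rw [mul_one] at this
      exact this
    have h2 := ((hasDerivAt_pow (n + 2) y).const_mul (F x)).sub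
      (((hasDerivAt_pow (n + 1) y).mul h1).div_const x)
    refine h2.congr_deriv ?_
    rw [hA]
    have e1 : n + 2 - 1 = n + 1 := rfl
    have e2 : n + 1 - 1 = n := rfl
    rw [e1, e2]
    push_cast
    have := hF (x * y)
    field_simp
    linear_combination (y ^ (n + 1)) * this
  rw [← intervalIntegral.integral_const_mul, intervalIntegral.integral_eq_sub_of_hasDerivAt hd]
  · simp [hA]
    field_simp
  · apply Continuous.intervalIntegrable; fun_prop

/-- With `h` moreover not constant and `N ≥ 2`, `F` is strictly increasing,
`g(x) − F(x) = N(N−1)∫₀¹ (F(x) − F(xy)) y^{N−1} dy`, which is `> 0` for `x > 0` and `< 0` for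
`x < 0`; in particular `F(x*) < g(x*)` for `x* > 0` (the last slice trades above the signal)
and `g(x*) < F(x*)` for `x* < 0`. -/
theorem stmt4 (σ : ℝ) (hσ : 0 < σ) (N : ℕ) (hN : 2 ≤ N)
    (h : ℝ → ℝ) (hmeas : Measurable h) (hmono : Monotone h) (hbdd : ∃ C, ∀ x, |h x| ≤ C)
    (hnc : ¬ ∃ c : ℝ, ∀ x, h x = c)
    (g F : ℝ → ℝ)
    (hg : ∀ x, g x = ∫ z, h (x + z) * gq σ z)
    (hF0 : F 0 = g 0)
    (hF : ∀ x : ℝ, x ≠ 0 → F x = g x / N + (((N:ℝ) - 1) / (N * x)) * ∫ u in (0:ℝ)..x, g u) :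
    StrictMono F ∧
    (∀ x : ℝ, g x - F x = N * ((N:ℝ) - 1) * ∫ y in (0:ℝ)..1, (F x - F (x * y)) * y ^ (N - 1)) ∧
    (∀ x : ℝ, 0 < x →
      0 < N * ((N:ℝ) - 1) * ∫ y in (0:ℝ)..1, (F x - F (x * y)) * y ^ (N - 1)) ∧
    (∀ x : ℝ, x < 0 →
      N * ((N:ℝ) - 1) * (∫ y in (0:ℝ)..1, (F x - F (x * y)) * y ^ (N - 1)) < 0) ∧
    (∀ x : ℝ, 0 < x → F x < g x) ∧
    (∀ x : ℝ, x < 0 → g x < F x) := by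
  have hgeq : g = fun x => ∫ z, h (x + z) * gq σ z := funext hg
  have hgc : Continuous g := hgeq ▸ aux_cont σ hσ h hmeas hmono hbdd
  have hgs : StrictMono g := hgeq ▸ aux_strict σ hσ h hmeas hmono hbdd hnc
  obtain ⟨n, rfl⟩ : ∃ n, N = n + 2 := ⟨N - 2, by omega⟩
  set A : ℝ → ℝ := fun x => ∫ y in (0:ℝ)..1, g (x * y) with hAdef
  have hA : ∀ x, ∫ u in (0:ℝ)..x, g u = x * A x := by
    intro x
    have := intervalIntegral.mul_integral_comp_mul_left (a := 0) (b := 1) (f := g) (c := x)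
    simp only [mul_zero, mul_one] at this
    exact this.symm
  have hAc : Continuous A := by
    apply intervalIntegral.continuous_parametric_intervalIntegral_of_continuous' (by fun_prop)
  have hAi : ∀ x, IntervalIntegrable (fun y => g (x * y)) volume 0 1 := fun x =>
    (hgc.comp (continuous_const_mul x)).intervalIntegrable _ _
  have hAm : Monotone A := by
    intro x y hxy
    refine intervalIntegral.integral_mono_on zero_le_one (hAi x) (hAi y) fun t ht => ?_
    exact hgs.monotone (mul_le_mul_of_nonneg_right hxy ht.1)
  have hA0 : A 0 = g 0 := by simp [hAdef]
  have hn : (0:ℝ) < (n:ℝ) + 2 := by positivity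
  have hFA : ∀ x, ((n:ℝ) + 2) * F x = g x + ((n:ℝ) + 1) * A x := by
    intro x
    rcases eq_or_ne x 0 with rfl | hx
    · rw [hF0, hA0]; ring
    · rw [hF x hx, hA]
      push_cast
      field_simp
      ring
  have hFe : F = fun x => (g x + ((n:ℝ) + 1) * A x) / ((n:ℝ) + 2) := by
    funext x; rw [← hFA x]; field_simp
  have hFc : Continuous F := by rw [hFe]; fun_prop
  have hFs : StrictMono F := by
    intro x y hxy
    have h1 := hgs hxy
    have h2 := mul_le_mul_of_nonneg_left (hAm hxy.le) (by positivity : (0:ℝ) ≤ (n:ℝ) + 1)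
    have h3 := hFA x
    have h4 := hFA y
    exact lt_of_mul_lt_mul_left (by linarith) hn.le
  have hid : ∀ x : ℝ, g x - F x = ((n + 2 : ℕ) : ℝ) * (((n + 2 : ℕ) : ℝ) - 1) *
      ∫ y in (0:ℝ)..1, (F x - F (x * y)) * y ^ (n + 2 - 1) := by
    intro x
    rcases eq_or_ne x 0 with rfl | hx
    · simp [hF0]
    · have h1 := aux_ident n g A F hgc hFc hA hFA x hx
      have e1 : n + 2 - 1 = n + 1 := rfl
      rw [e1]
      push_cast
      have h2 := hFA x
      linear_combination (-(n:ℝ) - 1) * h1 - h2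
  have hlt : ∀ x : ℝ, 0 < x → A x < g x := by
    intro x hx
    have := intervalIntegral.integral_lt_integral_of_continuousOn_of_le_of_exists_lt
      (a := 0) (b := 1) (f := fun y => g (x * y)) (g := fun _ => g x) zero_lt_one
      (hgc.comp (continuous_const_mul x)).continuousOn continuousOn_const
      (fun y hy => hgs.monotone (by nlinarith [hy.2])) ⟨0, by simp, hgs (by simpa using hx)⟩
    simpa using this
  have hgt : ∀ x : ℝ, x < 0 → g x < A x := by
    intro x hx
    have := intervalIntegral.integral_lt_integral_of_continuousOn_of_le_of_exists_lt
      (a := 0) (b := 1) (f := fun _ => g x) (g := fun y => g (x * y)) zero_lt_one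
      continuousOn_const (hgc.comp (continuous_const_mul x)).continuousOn
      (fun y hy => hgs.monotone (by nlinarith [hy.2])) ⟨0, by simp, hgs (by simpa using hx)⟩
    simpa using this
  have hn1 : (0:ℝ) < (n:ℝ) + 1 := by positivity
  have hp : ∀ x : ℝ, 0 < x → F x < g x := by
    intro x hx
    have h1 := hFA x
    have h2 := mul_lt_mul_of_pos_left (hlt x hx) hn1
    exact lt_of_mul_lt_mul_left (by linarith) hn.le
  have hm : ∀ x : ℝ, x < 0 → g x < F x := by
    intro x hx
    have h1 := hFA x
    have h2 := mul_lt_mul_of_pos_left (hgt x hx) hn1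
    exact lt_of_mul_lt_mul_left (by linarith) hn.le
  refine ⟨hFs, hid, fun x hx => ?_, fun x hx => ?_, hp, hm⟩
  · rw [← hid x]; exact sub_pos.2 (hp x hx)
  · rw [← hid x]; exact sub_neg.2 (hm x hx)
end

section
/- Define the implementation shortfall IS(x) = (1/x)·∫₀ˣ g(y) dy for x ≠ 0. Then IS(x) = N·∫₀¹ F(x·y)·y^{N−1} dy for every x ≠ 0. If moreover h is not constant, then IS(x) < F(x) for every x > 0 and IS(x) > F(x) for every x < 0. -/
open MeasureTheory Filter Set

lemma gq_pos {σ : ℝ} (hσ : 0 < σ) (z : ℝ) : 0 < gq σ z := by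
  unfold gq
  positivity

lemma gq_cont {σ : ℝ} (hσ : 0 < σ) : Continuous (gq σ) := by
  unfold gq
  fun_prop

lemma gq_int {σ : ℝ} (hσ : 0 < σ) : Integrable (gq σ) := by
  have h1 : Integrable (fun z : ℝ => Real.exp (-(1 / (2 * σ ^ 2)) * z ^ 2)) :=
    integrable_exp_neg_mul_sq (by positivity)
  have h2 := h1.div_const (σ * Real.sqrt (2 * Real.pi))
  refine h2.congr (Eventually.of_forall fun z => ?_)
  simp only [gq]
  congr 2
  ring

lemma hq_int {σ : ℝ} (hσ : 0 < σ) {h : ℝ → ℝ} (hmeas : Measurable h) {C : ℝ}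
    (hC : ∀ x, |h x| ≤ C) (x : ℝ) : Integrable (fun z => h (x + z) * gq σ z) := by
  refine (gq_int hσ).bdd_mul (c := C) ?_ ?_
  · exact (hmeas.comp (measurable_const_add x)).aestronglyMeasurable
  · exact Eventually.of_forall fun z => hC _

lemma g_cont {σ : ℝ} (hσ : 0 < σ) {h : ℝ → ℝ} (hmeas : Measurable h) (hmono : Monotone h) {C : ℝ}
    (hC : ∀ x, |h x| ≤ C) : Continuous (fun x => ∫ z, h (x + z) * gq σ z) := by
  rw [continuous_iff_continuousAt]
  intro x
  refine continuousAt_of_dominated (bound := fun z => C * gq σ z) ?_ ?_ ?_ ?_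
  · exact Eventually.of_forall fun y => (hq_int hσ hmeas hC y).aestronglyMeasurable
  · refine Eventually.of_forall fun y => Eventually.of_forall fun z => ?_
    rw [norm_mul, Real.norm_eq_abs, Real.norm_eq_abs, abs_of_pos (gq_pos hσ z)]
    exact mul_le_mul_of_nonneg_right (hC _) (gq_pos hσ z).le
  · exact (gq_int hσ).const_mul C
  · have h1 : ∀ᵐ w : ℝ, ContinuousAt h w := by
      have := hmono.countable_not_continuousAt
      exact this.ae_notMem volume |>.mono fun w hw => by simpa using hw
    have h2 : ∀ᵐ z : ℝ, ContinuousAt h (x + z) :=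
      (measurePreserving_add_left volume x).quasiMeasurePreserving.ae h1
    filter_upwards [h2] with z hz
    refine ContinuousAt.mul ?_ continuousAt_const
    exact ContinuousAt.comp (f := fun y : ℝ => y + z) (g := h) hz (by fun_prop)

lemma g_strict {σ : ℝ} (hσ : 0 < σ) {h : ℝ → ℝ} (hmeas : Measurable h) (hmono : Monotone h) {C : ℝ}
    (hC : ∀ x, |h x| ≤ C) (hnc : ¬ ∃ c : ℝ, ∀ x, h x = c) :
    StrictMono (fun x => ∫ z, h (x + z) * gq σ z) := by
  intro x y hxy
  have hle : ∀ z, h (x + z) * gq σ z ≤ h (y + z) * gq σ z := fun z =>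
    mul_le_mul_of_nonneg_right (hmono (by linarith)) (gq_pos hσ z).le
  refine lt_of_le_of_ne (integral_mono (hq_int hσ hmeas hC x) (hq_int hσ hmeas hC y) hle) ?_
  intro heq
  have hae := (integral_eq_iff_of_ae_le (hq_int hσ hmeas hC x) (hq_int hσ hmeas hC y)
    (Eventually.of_forall hle)).1 heq
  have h1 : ∀ᵐ z : ℝ, h (x + z) = h (y + z) := by
    filter_upwards [hae] with z hz
    exact mul_right_cancel₀ (gq_pos hσ z).ne' hz
  have h2 : ∀ᵐ z : ℝ, ∀ n : ℕ, h (x + (n * (y - x) + z)) = h (y + (n * (y - x) + z)) := by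
    rw [ae_all_iff]
    intro n
    exact (measurePreserving_add_left volume ((n : ℝ) * (y - x))).quasiMeasurePreserving.ae h1
  have hab : ∃ a b, h a < h b := by
    by_contra hcon
    push Not at hcon
    exact hnc ⟨h 0, fun x => le_antisymm (hcon _ _) (hcon _ _)⟩
  obtain ⟨a, b, hab⟩ := hab
  obtain ⟨z, hz, hza⟩ : ∃ z : ℝ, (∀ n : ℕ, h (x + (n * (y - x) + z)) = h (y + (n * (y - x) + z)))
      ∧ x + z < a := by
    by_contra hcon
    push Not at hcon
    have h3 : ∀ᵐ z : ℝ, z ∉ Set.Iio (a - x) := by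
      filter_upwards [h2] with z hz
      have := hcon z hz
      simp only [Set.mem_Iio, not_lt]
      linarith
    have h4 := measure_eq_zero_iff_ae_notMem.2 h3
    simp at h4
  have h5 : ∀ n : ℕ, h (x + (n * (y - x) + z)) = h (x + z) := by
    intro n
    induction n with
    | zero => simp
    | succ k ih =>
      rw [← ih, hz k]
      congr 1
      push_cast
      ring
  obtain ⟨n, hn⟩ := exists_nat_gt ((b - (x + z)) / (y - x))
  rw [div_lt_iff₀ (by linarith)] at hn
  have h6 : h b ≤ h (x + (n * (y - x) + z)) := hmono (by linarith)
  have h7 := hmono hza.le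
  rw [h5] at h6
  linarith

/-- With `IS(x) = (1/x)∫₀ˣ g(y) dy` for `x ≠ 0`, one has
`IS(x) = N·∫₀¹ F(xy)·y^{N−1} dy` for every `x ≠ 0`; and if `h` is not constant then
`IS(x) < F(x)` for `x > 0` and `IS(x) > F(x)` for `x < 0`. -/
theorem stmt5 (σ : ℝ) (hσ : 0 < σ) (N : ℕ) (hN : 1 ≤ N)
    (h : ℝ → ℝ) (hmeas : Measurable h) (hmono : Monotone h) (hbdd : ∃ C, ∀ x, |h x| ≤ C)
    (g F IS : ℝ → ℝ)
    (hg : ∀ x, g x = ∫ z, h (x + z) * gq σ z)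
    (hF0 : F 0 = g 0)
    (hF : ∀ x : ℝ, x ≠ 0 → F x = g x / N + (((N:ℝ) - 1) / (N * x)) * ∫ u in (0:ℝ)..x, g u)
    (hIS : ∀ x : ℝ, x ≠ 0 → IS x = (1 / x) * ∫ y in (0:ℝ)..x, g y) :
    (∀ x : ℝ, x ≠ 0 → IS x = N * ∫ y in (0:ℝ)..1, F (x * y) * y ^ (N - 1)) ∧
    ((¬ ∃ c : ℝ, ∀ x, h x = c) →
      (∀ x : ℝ, 0 < x → IS x < F x) ∧ (∀ x : ℝ, x < 0 → F x < IS x)) := by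
  obtain ⟨C, hC⟩ := hbdd
  have hgfun : g = fun x => ∫ z, h (x + z) * gq σ z := funext hg
  have gc : Continuous g := hgfun ▸ g_cont hσ hmeas hmono hC
  have hGd : ∀ x, HasDerivAt (fun x => ∫ u in (0:ℝ)..x, g u) (g x) x := fun x =>
    intervalIntegral.integral_hasDerivAt_right (gc.intervalIntegrable _ _)
      (gc.stronglyMeasurableAtFilter _ _) gc.continuousAt
  have hNpos : (0:ℝ) < N := by exact_mod_cast hN
  constructor
  · intro x hx
    obtain ⟨n, rfl⟩ : ∃ n, N = n + 1 := ⟨N - 1, by omega⟩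
    set G : ℝ → ℝ := fun x => ∫ u in (0:ℝ)..x, g u with hG
    have Gc : Continuous G := continuous_iff_continuousAt.2 fun x => (hGd x).continuousAt
    have hG0 : G 0 = 0 := by simp [hG]
    rw [← intervalIntegral.integral_const_mul]
    have hcong : ∫ y in (0:ℝ)..1, ((n + 1 : ℕ) : ℝ) * (F (x * y) * y ^ (n + 1 - 1)) =
        ∫ y in (0:ℝ)..1, ((n * y ^ (n - 1)) * (G (x * y) / x) + y ^ n * (g (x * y) * x / x)) := by
      refine intervalIntegral.integral_congr_ae (Eventually.of_forall fun y hy => ?_)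
      rw [Set.uIoc_of_le zero_le_one] at hy
      have hy0 : y ≠ 0 := hy.1.ne'
      rw [hF _ (mul_ne_zero hx hy0)]
      change _ * ((_ + _ * G (x * y)) * _) = _
      rcases n with _ | m
      · simp; field_simp
      · simp only [Nat.add_sub_cancel, pow_succ]
        have hm : ((m + 1 + 1 : ℕ) : ℝ) ≠ 0 := hNpos.ne'
        push_cast at hm ⊢
        field_simp
        ring
    rw [hcong, hIS x hx]
    have hd : ∀ y ∈ Set.uIcc (0:ℝ) 1, HasDerivAt (fun y => y ^ n * (G (x * y) / x))
        ((n * y ^ (n - 1)) * (G (x * y) / x) + y ^ n * (g (x * y) * x / x)) y := by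
      intro y _
      refine (hasDerivAt_pow n y).mul (HasDerivAt.div_const ?_ x)
      have h1 : HasDerivAt (fun y : ℝ => x * y) x y := by
        simpa using (hasDerivAt_id y).const_mul x
      exact (hGd (x * y)).comp y h1
    rw [intervalIntegral.integral_eq_sub_of_hasDerivAt hd
      (Continuous.intervalIntegrable (by fun_prop) _ _)]
    simp [hG0]
    change x⁻¹ * G x = _
    ring
  · intro hnc
    have gs : StrictMono g := hgfun ▸ g_strict hσ hmeas hmono hC hnc
    have key : ∀ x, x ≠ 0 → F x - IS x = (g x - IS x) / N := by
      intro x hx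
      rw [hF x hx, hIS x hx]
      field_simp
      ring
    constructor
    · intro x hx
      have h1 : ∫ u in (0:ℝ)..x, g u < ∫ u in (0:ℝ)..x, g x :=
        intervalIntegral.integral_lt_integral_of_continuousOn_of_le_of_exists_lt hx
          gc.continuousOn continuousOn_const (fun u hu => gs.monotone hu.2)
          ⟨0, ⟨le_rfl, hx.le⟩, gs hx⟩
      have h2 : IS x < g x := by
        rw [hIS x hx.ne', one_div, inv_mul_lt_iff₀ hx]
        simpa using h1
      have := div_pos (sub_pos.2 h2) hNpos
      rw [← key x hx.ne'] at this
      linarith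
    · intro x hx
      have h1 : ∫ u in x..(0:ℝ), g x < ∫ u in x..(0:ℝ), g u :=
        intervalIntegral.integral_lt_integral_of_continuousOn_of_le_of_exists_lt hx
          continuousOn_const gc.continuousOn (fun u hu => gs.monotone hu.1.le)
          ⟨0, ⟨hx.le, le_rfl⟩, gs hx⟩
      have h2 : g x < IS x := by
        rw [hIS x hx.ne, intervalIntegral.integral_symm]
        have h3 : 1 / x * -(∫ u in x..(0:ℝ), g u) = (∫ u in x..(0:ℝ), g u) / (-x) := by
          field_simp
        rw [h3, lt_div_iff₀ (by linarith)]
        simp at h1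
        linarith
      have := div_neg_of_neg_of_pos (sub_neg.2 h2) hNpos
      rw [← key x hx.ne] at this
      linarith
end
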